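/- If a countable hypergraph E has no minimal cover, then E contains a subhypergraph isomorphic to the hypergraph ω (i.e., there exist a sequence of edges (E_n) in E and an infinite set Ω ⊆ ⋃E together with a bijection f : ℕ → Ω such that f⁻¹(E_n ∩ Ω) = {0,…,n−1} for all n). -/

import Mathlib

/-- `C` is a cover of the hypergraph `E`. -/
def IsCover {α : Type*} (E C : Set (Set α)) : Prop :=
  C ⊆ E ∧ ⋃₀ C = ⋃₀ E

/-- `C` is a minimal cover of the hypergraph `E`. -/
def IsMinimalCover {α : Type*} (E C : Set (Set α)) : Prop :=
  IsCover E C ∧ ∀ D ⊆ C, IsCover E D → D = C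

/-- `S` is a subhypergraph of `E`. -/
def IsSubhypergraph {α : Type*} (E S : Set (Set α)) : Prop :=
  ∃ F ⊆ E, ∃ A ⊆ ⋃₀ F, S = (fun T => T ∩ A) '' F

/-- `S` has a maximal edge. -/
def HasMaximalEdge {α : Type*} (S : Set (Set α)) : Prop :=
  ∃ M ∈ S, ∀ T ∈ S, M ⊆ T → T = M

/-- `S` is isomorphic to the hypergraph ω, whose vertex set is ℕ and whose
edges are the initial segments `{0, …, n-1}` for `n : ℕ`. -/
def IsoToOmega {α : Type*} (S : Set (Set α)) : Prop :=
  ∃ f : ℕ → α, Function.Injective f ∧ Set.range f = ⋃₀ S ∧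
    S = {T | ∃ n : ℕ, T = f '' Set.Iio n}

/-!
Run through the countably many vertices, covering each in turn by an edge that receives a private
vertex, and never using later an edge through a private vertex chosen before. Such a choice gets
stuck only if some vertex loses all its remaining edges. To prevent this, make the new private
vertex `x` one whose set of remaining edges is minimal among the uncovered vertices: any other
uncovered vertex then lies in the new edge or in a remaining edge that avoids `x`. If no minimal
`x` exists, there is an infinite strictly descending sequence of sets of remaining edges, and its
vertices together with edges witnessing the strictness form a copy of `ω`.
-/

section

variable {α : Type*} {E F : Set (Set α)} {v : α}

/-- `E` has a subhypergraph isomorphic to `ω`: the vertices `f 0, f 1, …` and the edges `S n`, where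
`S n` meets these vertices exactly in `{f 0, …, f (n - 1)}`. -/
def ContainsOmega (E : Set (Set α)) : Prop :=
  ∃ S : ℕ → Set α, (∀ n, S n ∈ E) ∧
    ∃ f : ℕ → α, Function.Injective f ∧ Set.range f ⊆ ⋃₀ E ∧
      ∀ n, f ⁻¹' (S n ∩ Set.range f) = Set.Iio n

theorem ContainsOmega.mono (hFE : F ⊆ E) : ContainsOmega F → ContainsOmega E :=
  fun ⟨S, hS, f, hf, hfF, hSf⟩ =>
    ⟨S, fun n => hFE (hS n), f, hf, hfF.trans (Set.sUnion_subset_sUnion hFE), hSf⟩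

/-- The star of the vertex `v`: the set of edges of `E` through `v`. -/
def edgesAt (E : Set (Set α)) (v : α) : Set (Set α) :=
  {T ∈ E | v ∈ T}

theorem containsOmega_of_strictAnti_edgesAt {x : ℕ → α}
    (hx : StrictAnti fun n => edgesAt E (x n)) : ContainsOmega E := by
  choose S hS hS_succ using fun n => Set.exists_of_ssubset (hx (Nat.lt_succ_self n))
  have mem_iff (m n : ℕ) : x m ∈ S n ↔ m ≤ n := by
    refine ⟨fun hm => ?_, fun hmn => (hx.antitone hmn (hS n)).2⟩
    by_contra! hnm
    exact hS_succ n (hx.antitone hnm ⟨(hS n).1, hm⟩)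
  refine ⟨S, fun n => (hS n).1, fun n => x (n + 1), ?_, ?_, fun n => ?_⟩
  · exact (Function.Injective.of_comp (f := edgesAt E) hx.injective).comp Nat.succ_injective
  · rintro _ ⟨n, rfl⟩
    exact ⟨S (n + 1), hS (n + 1)⟩
  · ext m
    simp [mem_iff]

theorem wellFoundedLT_range_edgesAt (h : ¬ ContainsOmega E) :
    WellFoundedLT (Set.range (edgesAt E)) := by
  refine ⟨wellFounded_iff_isEmpty_descending_chain.2 ⟨fun ⟨s, hs⟩ => h ?_⟩⟩
  choose x hx using fun n => (s n).2
  refine containsOmega_of_strictAnti_edgesAt (x := x) (strictAnti_nat_of_succ_lt fun n => ?_)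
  simpa only [hx] using Subtype.coe_lt_coe.2 (hs n)

theorem exists_minimalFor_edgesAt_subset (h : ¬ ContainsOmega E) {s : Set α} (hv : v ∈ s) :
    ∃ x, MinimalFor (· ∈ s) (edgesAt E) x ∧ edgesAt E x ⊆ edgesAt E v := by
  have := wellFoundedLT_range_edgesAt h
  obtain ⟨x, ⟨hxs, hxv⟩, hx_min⟩ := exists_minimalFor_of_wellFoundedLT
    (fun x => x ∈ s ∧ edgesAt E x ⊆ edgesAt E v) (Set.rangeFactorization (edgesAt E))
    ⟨v, hv, subset_rfl⟩
  exact ⟨x, ⟨hxs, fun y hys hyx => hx_min ⟨hys, hyx.trans hxv⟩ hyx⟩, hxv⟩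

/-- `x` is a private vertex of `T` in the family `C`: it lies in `T` and in no other member
of `C`. -/
def IsPrivateVertex (C : Set (Set α)) (T : Set α) (x : α) : Prop :=
  x ∈ T ∧ ∀ T' ∈ C, x ∈ T' → T' = T

theorem IsCover.isMinimalCover_of_isPrivateVertex {C : Set (Set α)} (hC : IsCover E C)
    (hpriv : ∀ T ∈ C, ∃ x, IsPrivateVertex C T x) : IsMinimalCover E C := by
  refine ⟨hC, fun D hDC hD => hDC.antisymm fun T hT => ?_⟩
  obtain ⟨x, hxT, hx⟩ := hpriv T hT
  obtain ⟨T', hT'D, hxT'⟩ : x ∈ ⋃₀ D := hD.2 ▸ ⟨T, hC.1 hT, hxT⟩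
  exact hx T' (hDC hT'D) hxT' ▸ hT'D

/-- The edges of `E` that remain available when the vertices in `X` are forbidden. -/
def edgesAvoiding (E : Set (Set α)) (X : Set α) : Set (Set α) :=
  {T ∈ E | Disjoint T X}

/-- An approximation to a minimal cover of `E`: a set of edges with private vertices among the
`witnesses`, such that every uncovered vertex still lies in an edge avoiding the witnesses. -/
structure PartialCover (E : Set (Set α)) where
  edges : Set (Set α)
  witnesses : Set α
  edges_subset : edges ⊆ E
  exists_isPrivateVertex : ∀ T ∈ edges, ∃ x ∈ witnesses, IsPrivateVertex edges T x
  subset_union : ⋃₀ E ⊆ ⋃₀ edges ∪ ⋃₀ edgesAvoiding E witnesses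

namespace PartialCover

/-- `p ≤ q` if `q` extends `p` by edges avoiding the witnesses of `p`, so that private vertices
stay private. -/
instance : Preorder (PartialCover E) where
  le p q := p.edges ⊆ q.edges ∧ p.witnesses ⊆ q.witnesses ∧
    ∀ T ∈ q.edges, T ∈ p.edges ∨ Disjoint T p.witnesses
  le_refl _ := ⟨subset_rfl, subset_rfl, fun _ => Or.inl⟩
  le_trans p q r hpq hqr := by
    refine ⟨hpq.1.trans hqr.1, hpq.2.1.trans hqr.2.1, fun T hT => ?_⟩
    rcases hqr.2.2 T hT with hTq | hTq
    · exact hpq.2.2 T hTq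
    · exact .inr (hTq.mono_right hpq.2.1)

instance : Inhabited (PartialCover E) where
  default :=
    { edges := ∅
      witnesses := ∅
      edges_subset := Set.empty_subset E
      exists_isPrivateVertex := by simp
      subset_union := by simp [edgesAvoiding] }

theorem isPrivateVertex_of_le {p q : PartialCover E} (hpq : p ≤ q) {T : Set α} {x : α}
    (hx : x ∈ p.witnesses) (h : IsPrivateVertex p.edges T x) : IsPrivateVertex q.edges T x := by
  refine ⟨h.1, fun T' hT' hxT' => ?_⟩
  rcases hpq.2.2 T' hT' with hT'p | hdisj
  · exact h.2 T' hT'p hxT'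
  · exact absurd hx (Set.disjoint_left.1 hdisj hxT')

section Extension

variable (p : PartialCover E) {M : Set α} {x : α}

theorem exists_isPrivateVertex_insert (hM : M ∈ edgesAt (edgesAvoiding E p.witnesses) x)
    (hx : x ∉ ⋃₀ p.edges) :
    ∀ T ∈ insert M p.edges, ∃ y ∈ insert x p.witnesses,
      IsPrivateVertex (insert M p.edges) T y := by
  rintro T (rfl | hT)
  · refine ⟨x, Set.mem_insert _ _, hM.2, ?_⟩
    rintro T' (rfl | hT') hxT'
    · rfl
    · exact absurd ⟨T', hT', hxT'⟩ hx
  · obtain ⟨y, hy, hyT, hy_unique⟩ := p.exists_isPrivateVertex T hT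
    refine ⟨y, Set.mem_insert_of_mem _ hy, hyT, ?_⟩
    rintro T' (rfl | hT') hyT'
    · exact absurd hy (Set.disjoint_left.1 hM.1.2 hyT')
    · exact hy_unique T' hT' hyT'

theorem sUnion_subset_insert_union (hM : M ∈ edgesAt (edgesAvoiding E p.witnesses) x)
    (hx : MinimalFor (· ∈ ⋃₀ E \ ⋃₀ p.edges) (edgesAt (edgesAvoiding E p.witnesses)) x) :
    ⋃₀ E ⊆ ⋃₀ insert M p.edges ∪ ⋃₀ edgesAvoiding E (insert x p.witnesses) := by
  intro w hwE
  by_contra! hw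
  simp only [Set.sUnion_insert, Set.mem_union, not_or] at hw
  obtain ⟨⟨hwM, hwp⟩, hw_avoid⟩ := hw
  have hwx : edgesAt (edgesAvoiding E p.witnesses) w ⊆
      edgesAt (edgesAvoiding E p.witnesses) x := by
    refine fun T hT => ⟨hT.1, ?_⟩
    by_contra hxT
    exact hw_avoid ⟨T, ⟨hT.1.1, Set.disjoint_insert_right.2 ⟨hxT, hT.1.2⟩⟩, hT.2⟩
  exact hwM (hx.2 ⟨hwE, hwp⟩ hwx hM).2

/-- The extension of `p` by the edge `M` with private vertex `x`, where the star of `x` among the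
remaining edges is minimal over all uncovered vertices. -/
def insertEdge (hM : M ∈ edgesAt (edgesAvoiding E p.witnesses) x)
    (hx : MinimalFor (· ∈ ⋃₀ E \ ⋃₀ p.edges) (edgesAt (edgesAvoiding E p.witnesses)) x) :
    PartialCover E where
  edges := insert M p.edges
  witnesses := insert x p.witnesses
  edges_subset := Set.insert_subset hM.1.1 p.edges_subset
  exists_isPrivateVertex := p.exists_isPrivateVertex_insert hM hx.prop.2
  subset_union := p.sUnion_subset_insert_union hM hx

theorem le_insertEdge (hM : M ∈ edgesAt (edgesAvoiding E p.witnesses) x)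
    (hx : MinimalFor (· ∈ ⋃₀ E \ ⋃₀ p.edges) (edgesAt (edgesAvoiding E p.witnesses)) x) :
    p ≤ p.insertEdge hM hx := by
  refine ⟨Set.subset_insert _ _, Set.subset_insert _ _, ?_⟩
  rintro T (rfl | hT)
  exacts [.inr hM.1.2, .inl hT]

theorem isCofinal_setOf_mem_sUnion_edges (h : ¬ ContainsOmega E) (hv : v ∈ ⋃₀ E) :
    IsCofinal {p : PartialCover E | v ∈ ⋃₀ p.edges} := by
  intro p
  by_cases hvp : v ∈ ⋃₀ p.edges
  · exact ⟨p, hvp, le_rfl⟩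
  have hω : ¬ ContainsOmega (edgesAvoiding E p.witnesses) :=
    mt (ContainsOmega.mono (Set.sep_subset E _)) h
  obtain ⟨x, hx, hxv⟩ := exists_minimalFor_edgesAt_subset hω (s := ⋃₀ E \ ⋃₀ p.edges) ⟨hv, hvp⟩
  obtain ⟨M, hM⟩ := (p.subset_union hx.prop.1).resolve_left hx.prop.2
  exact ⟨p.insertEdge hM hx, ⟨M, Set.mem_insert _ _, (hxv hM).2⟩, p.le_insertEdge hM hx⟩

end Extension

theorem isMinimalCover_iUnion_edges {D : Set (PartialCover E)} (hD : DirectedOn (· ≤ ·) D)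
    (hcover : ∀ v ∈ ⋃₀ E, ∃ p ∈ D, v ∈ ⋃₀ p.edges) :
    IsMinimalCover E (⋃ p ∈ D, p.edges) := by
  have hsub : ⋃ p ∈ D, p.edges ⊆ E := Set.iUnion₂_subset fun p _ => p.edges_subset
  refine IsCover.isMinimalCover_of_isPrivateVertex
    ⟨hsub, (Set.sUnion_subset_sUnion hsub).antisymm fun v hv => ?_⟩ fun T hT => ?_
  · obtain ⟨p, hp, T, hT, hvT⟩ := hcover v hv
    exact ⟨T, Set.mem_biUnion hp hT, hvT⟩
  · obtain ⟨p, hp, hTp⟩ := Set.mem_iUnion₂.1 hT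
    obtain ⟨x, hx, hxT⟩ := p.exists_isPrivateVertex T hTp
    refine ⟨x, hxT.1, fun T' hT' hxT' => ?_⟩
    obtain ⟨q, hq, hT'q⟩ := Set.mem_iUnion₂.1 hT'
    obtain ⟨r, -, hpr, hqr⟩ := hD p hp q hq
    exact (isPrivateVertex_of_le hpr hx hxT).2 T' (hqr.1 hT'q) hxT'

end PartialCover

theorem stmt_3_general (hV : (⋃₀ E).Countable) (h : ¬ ∃ C, IsMinimalCover E C) :
    ContainsOmega E := by
  by_contra hω
  have := hV.to_subtype
  have := Encodable.ofCountable (⋃₀ E)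
  let covering (v : ⋃₀ E) : Order.Cofinal (PartialCover E) :=
    ⟨_, PartialCover.isCofinal_setOf_mem_sUnion_edges hω v.2⟩
  let I := Order.idealOfCofinals default covering
  refine h ⟨⋃ p ∈ (I : Set (PartialCover E)), p.edges,
    PartialCover.isMinimalCover_iUnion_edges I.directed fun v hv => ?_⟩
  obtain ⟨p, hvp, hpI⟩ := Order.cofinal_meets_idealOfCofinals default covering ⟨v, hv⟩
  exact ⟨p, hpI, hvp⟩

end

theorem stmt_3 {α : Type*} (E : Set (Set α))
    (hEc : E.Countable) (hVc : (⋃₀ E).Countable)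
    (h : ¬ ∃ C, IsMinimalCover E C) :
    ∃ Eseq : ℕ → Set α, (∀ n, Eseq n ∈ E) ∧
      ∃ f : ℕ → α, Function.Injective f ∧ Set.range f ⊆ ⋃₀ E ∧
        ∀ n, f ⁻¹' (Eseq n ∩ Set.range f) = Set.Iio n :=
  stmt_3_general hVc h
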